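/- arXiv:2202.10506 — 2 statements merged into one kernel-verified Lean document; each statement's English description precedes it below -/
import Mathlib

section
/- Let S and A be nonempty finite sets, γ ∈ (0,1), for each a ∈ A let P_a be an |S|×|S| row-stochastic matrix and K_a = I − γP_a, let r ∈ ℝ^{S×A}, α > 0, τ > 0, 0 ≤ c < 1. Suppose (v*, u*) ∈ ℝ^S × ℝ_{>0}^{S×A} satisfies: α v*_{s'} = Σ_{s,a} K_{ass'} u*_{sa} for all s', and τ log(u*_{sa}/ũ*_s) = r_{sa} − Σ_{s'} K_{ass'} v*_{s'} for all (s,a). For (v,u) ∈ ℝ^S × ℝ_{>0}^{S×A}, with π_{sa} = u_{sa}/ũ_s, define the interpolating NGAD vector field V_{s'} = −( v_{s'} − (1/α) Σ_{s,a} K_{ass'} u_{sa} ) and, for each s, U_{s·} = −ũ_s ( diag(π_{s·}) − c π_{s·}π_{s·}ᵀ ) ( log(u_{s·}/ũ_s) − (1/τ)( r_{s·} − Σ_{s'} K_{·ss'} v_{s'} ) ). Then the directional derivative of L_c(v,u) = (α/2)Σ_s(v_s−v*_s)² + τΣ_{s,a}(u*_{sa}log(u*_{sa}/u_{sa}) +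 u_{sa} − u*_{sa}) + (cτ/(1−c))Σ_s(ũ*_s log(ũ*_s/ũ_s) + ũ_s − ũ*_s) along (V,U) equals −α Σ_{s'} (v_{s'} − v*_{s'})² − τ Σ_{s,a} (u_{sa} − u*_{sa})( log(u_{sa}/ũ_s) − log(u*_{sa}/ũ*_s) ), and this quantity is ≤ 0. -/
/-!
Write `g s a = log π_{sa} - (r_{sa} - (K_a v)_s) / τ` and `ḡ s = ∑ a, π_{sa} g s a`. The preconditioned
field is `U s a = -u_{sa} (g s a - c ḡ s)`, whose sum over `a` is `-(1 - c) ũ_s ḡ s`. The partial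
derivatives of the two entropy terms of `L` are `τ (1 - u*/u)` and `(c τ / (1 - c)) (1 - ũ*/ũ)`, so
the contributions `± c τ (ũ_s - ũ*_s) ḡ s` cancel (`block_cancel`) and only `-τ ∑ (u - u*) g`
remains, independently of `c`. Inserting the optimality conditions for `(v*, u*)`, the bilinear terms
`(u - u*) K (v - v*)` from the `v`- and `u`-parts cancel as well.

For the sign, `∑ a, (u - u*) (log π - log π*) = ũ KL(π ‖ π*) + ũ* KL(π* ‖ π) ≥ 0`
(`gibbs` applied twice).
-/

open Matrix

/-- Derivative at `0` of a Bregman (generalised Kullback–Leibler) term along a line. -/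
lemma hasDerivAt_klTerm {p x : ℝ} (y : ℝ) (hp : 0 < p) (hx : 0 < x) :
    HasDerivAt (fun t : ℝ => p * Real.log (p / (x + t * y)) + (x + t * y) - p)
      ((1 - p / x) * y) 0 := by
  have h1 : HasDerivAt (fun t : ℝ => x + t * y) y 0 := by
    simpa using ((hasDerivAt_id (0 : ℝ)).mul_const y).const_add x
  have hx0 : x + 0 * y ≠ 0 := by simpa using hx.ne'
  have h2 := (((hasDerivAt_const (0 : ℝ) p).div h1 hx0).log
    (div_ne_zero hp.ne' hx0)).const_mul p
  refine ((h2.add h1).sub_const p).congr_deriv ?_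
  have := hp.ne'
  have := hx.ne'
  simp only [zero_mul, add_zero, Pi.div_apply]
  field_simp
  ring

/-- Gibbs' inequality for unnormalised positive vectors: `(∑ x) * KL(x / ∑ x ‖ y / ∑ y) ≥ 0`. -/
lemma gibbs {A : Type*} [Fintype A] [Nonempty A] (x y : A → ℝ)
    (hx : ∀ a, 0 < x a) (hy : ∀ a, 0 < y a) :
    0 ≤ ∑ a, x a * (Real.log (x a / ∑ b, x b) - Real.log (y a / ∑ b, y b)) := by
  have hX : 0 < ∑ b, x b := Finset.sum_pos (fun a _ => hx a) Finset.univ_nonempty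
  have hY : 0 < ∑ b, y b := Finset.sum_pos (fun a _ => hy a) Finset.univ_nonempty
  set X := ∑ b, x b with hXd
  set Y := ∑ b, y b with hYd
  have hz : ∑ a, (x a - X / Y * y a) = 0 := by
    rw [Finset.sum_sub_distrib, ← Finset.mul_sum, ← hXd, ← hYd]
    field_simp
    ring
  rw [← hz]
  refine Finset.sum_le_sum fun a _ => ?_
  have hxa := hx a
  have hya := hy a
  have hl := Real.log_le_sub_one_of_pos (div_pos (div_pos hya hY) (div_pos hxa hX))
  rw [Real.log_div (div_pos hya hY).ne' (div_pos hxa hX).ne'] at hl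
  have he : x a - X / Y * y a = x a * (1 - y a / Y / (x a / X)) := by
    field_simp
  rw [he]
  exact mul_le_mul_of_nonneg_left (by linarith) hxa.le

/-- For a single state, the `c`-dependent parts of the two entropy derivatives cancel. -/
lemma block_cancel {A : Type*} [Fintype A] [Nonempty A] [DecidableEq A] (x p g W : A → ℝ) (c : ℝ)
    (hc : c < 1) (hx : ∀ a, 0 < x a)
    (hW : ∀ a, W a = -((∑ b, x b) * ∑ a', ((if a = a' then x a / ∑ b, x b else 0) -
      c * (x a / ∑ b, x b) * (x a' / ∑ b, x b)) * g a')) :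
    (∑ a, (1 - p a / x a) * W a) + c / (1 - c) * ((1 - (∑ a, p a) / ∑ a, x a) * ∑ a, W a) =
      -∑ a, (x a - p a) * g a := by
  have hX : 0 < ∑ b, x b := Finset.sum_pos (fun a _ => hx a) Finset.univ_nonempty
  set X := ∑ b, x b with hXd
  set G := ∑ a, x a * g a with hG
  have hW' : ∀ a, W a = -(x a * g a) + c / X * G * x a := by
    intro a
    have : ∑ a', c * (x a / X) * (x a' / X) * g a' = c * (x a / X) / X * G := by
      rw [hG, Finset.mul_sum]
      exact Finset.sum_congr rfl fun b _ => by ring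
    rw [hW a]
    simp only [sub_mul, Finset.sum_sub_distrib, ite_mul, zero_mul, Finset.sum_ite_eq,
      Finset.mem_univ, if_true, this]
    field_simp
    ring
  have hs : ∑ a, W a = -((1 - c) * G) := by
    simp only [hW', Finset.sum_add_distrib, Finset.sum_neg_distrib, ← Finset.mul_sum]
    rw [← hG, ← hXd]
    field_simp
    ring
  have h1 : ∑ a, (1 - p a / x a) * W a =
      -(∑ a, (x a - p a) * g a) + c / X * G * (X - ∑ a, p a) := by
    rw [hXd, ← Finset.sum_sub_distrib, ← hXd, Finset.mul_sum, ← Finset.sum_neg_distrib,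
      ← Finset.sum_add_distrib]
    refine Finset.sum_congr rfl fun a _ => ?_
    have := (hx a).ne'
    rw [hW' a]
    field_simp
  have hc' : 1 - c ≠ 0 := by linarith
  rw [h1, hs]
  field_simp
  ring

/-- Along the interpolating NGAD vector field (V,U) (preconditioned by
diag(π_{s·}) − c π_{s·}π_{s·}ᵀ), the derivative of the interpolating Lyapunov function
L_c equals
−α Σ_{s'}(v_{s'}−v*_{s'})² − τ Σ_{s,a}(u_{sa}−u*_{sa})(log(u_{sa}/ũ_s) − log(u*_{sa}/ũ*_s)),
which is ≤ 0. -/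
theorem statement_14 (S A : Type*) [Fintype S] [Fintype A] [Nonempty S] [Nonempty A]
    [DecidableEq S] [DecidableEq A]
    (γ : ℝ) (hγ0 : 0 < γ) (hγ1 : γ < 1)
    (P : A → Matrix S S ℝ) (hP : ∀ a s s', 0 ≤ P a s s') (hrow : ∀ a s, ∑ s', P a s s' = 1)
    (K : A → Matrix S S ℝ) (hK : ∀ a, K a = 1 - γ • P a)
    (r : S → A → ℝ) (α τ c : ℝ) (hα : 0 < α) (hτ : 0 < τ) (hc0 : 0 ≤ c) (hc1 : c < 1)
    (vstar : S → ℝ) (ustar : S → A → ℝ) (hustar : ∀ s a, 0 < ustar s a)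
    (hfoc1 : ∀ s', α * vstar s' = ∑ s, ∑ a, K a s s' * ustar s a)
    (hfoc2 : ∀ s a, τ * Real.log (ustar s a / ∑ b, ustar s b) =
      r s a - ∑ s', K a s s' * vstar s')
    (v : S → ℝ) (u : S → A → ℝ) (hu : ∀ s a, 0 < u s a)
    (V : S → ℝ) (U : S → A → ℝ)
    (hV : ∀ s', V s' = -(v s' - (1 / α) * ∑ s, ∑ a, K a s s' * u s a))
    (hU : ∀ s a, U s a = -((∑ b, u s b) *
      ∑ a', ((if a = a' then u s a / ∑ b, u s b else 0) -
          c * (u s a / ∑ b, u s b) * (u s a' / ∑ b, u s b)) *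
        (Real.log (u s a' / ∑ b, u s b) -
          (1 / τ) * (r s a' - ∑ s', K a' s s' * v s'))))
    (L : (S → ℝ) → (S → A → ℝ) → ℝ)
    (hL : ∀ v' u', L v' u' = α / 2 * ∑ s, (v' s - vstar s) ^ 2 +
      τ * ∑ s, ∑ a, (ustar s a * Real.log (ustar s a / u' s a) + u' s a - ustar s a) +
      c * τ / (1 - c) * ∑ s, ((∑ a, ustar s a) * Real.log ((∑ a, ustar s a) / ∑ a, u' s a) +
        (∑ a, u' s a) - ∑ a, ustar s a)) :
    deriv (fun t : ℝ => L (fun s => v s + t * V s) (fun s a => u s a + t * U s a)) 0 =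
      -(α * ∑ s', (v s' - vstar s') ^ 2) -
        τ * ∑ s, ∑ a, (u s a - ustar s a) *
          (Real.log (u s a / ∑ b, u s b) - Real.log (ustar s a / ∑ b, ustar s b)) ∧
    deriv (fun t : ℝ => L (fun s => v s + t * V s) (fun s a => u s a + t * U s a)) 0 ≤ 0 := by
  have hder : HasDerivAt
      (fun t : ℝ => L (fun s => v s + t * V s) (fun s a => u s a + t * U s a))
      (α / 2 * ∑ s, 2 * (v s - vstar s) * V s +
        τ * ∑ s, ∑ a, (1 - ustar s a / u s a) * U s a +
        c * τ / (1 - c) * ∑ s, (1 - (∑ a, ustar s a) / ∑ a, u s a) * ∑ a, U s a) 0 := by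
    simp only [hL]
    refine HasDerivAt.add (HasDerivAt.add ?_ ?_) ?_
    · refine HasDerivAt.const_mul _ (HasDerivAt.fun_sum fun s _ => ?_)
      have h1 : HasDerivAt (fun t : ℝ => v s + t * V s - vstar s) (V s) 0 := by
        simpa using (((hasDerivAt_id (0 : ℝ)).mul_const (V s)).const_add (v s)).sub_const (vstar s)
      simpa using h1.fun_pow 2
    · exact HasDerivAt.const_mul _ (HasDerivAt.fun_sum fun s _ => HasDerivAt.fun_sum fun a _ =>
        hasDerivAt_klTerm (U s a) (hustar s a) (hu s a))
    · refine HasDerivAt.const_mul _ (HasDerivAt.fun_sum fun s _ => ?_)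
      have := hasDerivAt_klTerm (∑ a, U s a)
        (Finset.sum_pos (fun a _ => hustar s a) Finset.univ_nonempty)
        (Finset.sum_pos (fun a _ => hu s a) Finset.univ_nonempty)
      simpa only [Finset.sum_add_distrib, ← Finset.mul_sum] using this
  have hU' : (∑ s, ∑ a, (1 - ustar s a / u s a) * U s a) +
      c / (1 - c) * ∑ s, (1 - (∑ a, ustar s a) / ∑ a, u s a) * ∑ a, U s a =
      -∑ s, ∑ a, (u s a - ustar s a) * (Real.log (u s a / ∑ b, u s b) -
          (1 / τ) * (r s a - ∑ s', K a s s' * v s')) := by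
    rw [Finset.mul_sum, ← Finset.sum_add_distrib, ← Finset.sum_neg_distrib]
    exact Finset.sum_congr rfl fun s _ =>
      block_cancel (u s) (ustar s) _ (U s) c hc1 (hu s) (hU s)
  -- The optimality condition for `u*` turns `τ g` into a log-ratio plus a coupling term.
  have hg : ∀ s a, τ * ((u s a - ustar s a) * (Real.log (u s a / ∑ b, u s b) -
      (1 / τ) * (r s a - ∑ s', K a s s' * v s'))) =
      τ * ((u s a - ustar s a) *
        (Real.log (u s a / ∑ b, u s b) - Real.log (ustar s a / ∑ b, ustar s b))) +
      ∑ s', (v s' - vstar s') * (K a s s' * (u s a - ustar s a)) := by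
    intro s a
    have h1 : ∑ s', (v s' - vstar s') * (K a s s' * (u s a - ustar s a)) =
        (u s a - ustar s a) * (∑ s', K a s s' * v s' - ∑ s', K a s s' * vstar s') := by
      rw [← Finset.sum_sub_distrib, Finset.mul_sum]
      exact Finset.sum_congr rfl fun s' _ => by ring
    have h2 := hfoc2 s a
    rw [h1]
    field_simp
    linear_combination (u s a - ustar s a) * h2
  -- The optimality condition for `v*` turns `α V` into a damping term plus the same coupling.
  have hv : ∀ s', α * ((v s' - vstar s') * V s') = -(α * (v s' - vstar s') ^ 2) +
      ∑ s, ∑ a, (v s' - vstar s') * (K a s s' * (u s a - ustar s a)) := by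
    intro s'
    have h1 : ∑ s, ∑ a, (v s' - vstar s') * (K a s s' * (u s a - ustar s a)) =
        (v s' - vstar s') *
          (∑ s, ∑ a, K a s s' * u s a - ∑ s, ∑ a, K a s s' * ustar s a) := by
      simp only [← Finset.mul_sum, mul_sub, Finset.sum_sub_distrib]
    rw [h1, ← hfoc1 s', hV s']
    field_simp
    ring
  have hcomm : ∑ s', ∑ s, ∑ a, (v s' - vstar s') * (K a s s' * (u s a - ustar s a)) =
      ∑ s, ∑ a, ∑ s', (v s' - vstar s') * (K a s s' * (u s a - ustar s a)) := by
    rw [Finset.sum_comm]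
    exact Finset.sum_congr rfl fun s _ => Finset.sum_comm
  have hvs : α / 2 * ∑ s, 2 * (v s - vstar s) * V s = -(α * ∑ s', (v s' - vstar s') ^ 2) +
      ∑ s', ∑ s, ∑ a, (v s' - vstar s') * (K a s s' * (u s a - ustar s a)) := by
    rw [Finset.mul_sum, Finset.mul_sum, ← Finset.sum_neg_distrib, ← Finset.sum_add_distrib]
    refine Finset.sum_congr rfl fun s _ => ?_
    rw [← hv s]
    ring
  have hgs : τ * ∑ s, ∑ a, (u s a - ustar s a) * (Real.log (u s a / ∑ b, u s b) -
      (1 / τ) * (r s a - ∑ s', K a s s' * v s')) =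
      τ * (∑ s, ∑ a, (u s a - ustar s a) *
        (Real.log (u s a / ∑ b, u s b) - Real.log (ustar s a / ∑ b, ustar s b))) +
      ∑ s, ∑ a, ∑ s', (v s' - vstar s') * (K a s s' * (u s a - ustar s a)) := by
    simp only [Finset.mul_sum (a := τ), hg, Finset.sum_add_distrib]
  have heq : deriv (fun t : ℝ => L (fun s => v s + t * V s) (fun s a => u s a + t * U s a)) 0 =
      -(α * ∑ s', (v s' - vstar s') ^ 2) -
        τ * ∑ s, ∑ a, (u s a - ustar s a) *
          (Real.log (u s a / ∑ b, u s b) - Real.log (ustar s a / ∑ b, ustar s b)) := by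
    rw [hder.deriv]
    linear_combination hvs + τ * hU' - hgs + hcomm
  refine ⟨heq, ?_⟩
  rw [heq]
  have hsq : 0 ≤ α * ∑ s', (v s' - vstar s') ^ 2 :=
    mul_nonneg hα.le (Finset.sum_nonneg fun _ _ => sq_nonneg _)
  have hkl : 0 ≤ τ * ∑ s, ∑ a, (u s a - ustar s a) *
      (Real.log (u s a / ∑ b, u s b) - Real.log (ustar s a / ∑ b, ustar s b)) := by
    refine mul_nonneg hτ.le (Finset.sum_nonneg fun s _ => ?_)
    refine (add_nonneg (gibbs (u s) (ustar s) (hu s) (hustar s))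
      (gibbs (ustar s) (u s) (hustar s) (hu s))).trans_eq ?_
    rw [← Finset.sum_add_distrib]
    exact Finset.sum_congr rfl fun a _ => by ring
  linarith
end

section
/- Let S and A be nonempty finite sets, γ ∈ (0,1), for each a ∈ A let P_a be an |S|×|S| row-stochastic matrix and K_a = I − γP_a, let r ∈ ℝ^{S×A}, α > 0, τ > 0. Suppose (v¹, u¹) and (v², u²), both in ℝ^S × ℝ_{>0}^{S×A}, each satisfy the quadratically convexified first-order condition: α v_{s'} = Σ_{s,a} K_{ass'} u_{sa} for all s' ∈ S, and τ log(u_{sa}/ũ_s) = r_{sa} − Σ_{s'} K_{ass'} v_{s'} for all (s,a) ∈ S×A. Then (v¹, u¹) = (v², u²). -/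
/-!
Pairing the difference of the two `v`-equations with `v1 - v2` and substituting the `u`-equations
gives `α ‖v1 - v2‖² = -τ ∑ (u1 - u2) (log π1 - log π2)`, where `π i` is the policy obtained by
normalising `u i` in each state. The right-hand side is nonpositive, since in each state the sum
is a positive combination of the two relative entropies between `π1` and `π2`
(`sum_sub_mul_log_sub_nonneg`); hence `v1 = v2`, and the `u`-equations then give `π1 = π2 = π`.
The remaining freedom, the difference `d` of the state masses of `u1` and `u2`, satisfies
`K_πᵀ d = 0`, that is, `d = γ P_πᵀ d`. Since `P_πᵀ` does not increase the `ℓ¹` norm and `γ < 1`,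
`d = 0`.
-/

open Matrix

/-- Gibbs' inequality: `p` may have any positive mass, and the sum is that mass times the relative
entropy of normalised `p` with respect to normalised `q`. -/
lemma sum_mul_log_sub_nonneg {A : Type*} [Fintype A] [Nonempty A] (p q : A → ℝ)
    (hp : ∀ a, 0 < p a) (hq : ∀ a, 0 < q a) :
    0 ≤ ∑ a, p a * (Real.log (p a / ∑ b, p b) - Real.log (q a / ∑ b, q b)) := by
  have hPs : 0 < ∑ b, p b := Finset.sum_pos (fun b _ => hp b) Finset.univ_nonempty
  have hQs : 0 < ∑ b, q b := Finset.sum_pos (fun b _ => hq b) Finset.univ_nonempty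
  generalize hX : ∑ b, p b = X at *
  generalize hY : ∑ b, q b = Y at *
  have hle : ∑ a, (p a - X / Y * q a)
      ≤ ∑ a, p a * (Real.log (p a / X) - Real.log (q a / Y)) := by
    refine Finset.sum_le_sum fun a _ => ?_
    have h1 : 0 < p a / X := div_pos (hp a) hPs
    have h2 : 0 < q a / Y := div_pos (hq a) hQs
    have h3 := Real.log_le_sub_one_of_pos (div_pos h2 h1)
    rw [Real.log_div h2.ne' h1.ne'] at h3
    have h4 : p a - X / Y * q a = p a * (1 - q a / Y / (p a / X)) := by
      have := (hp a).ne'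
      field_simp
    rw [h4]
    exact mul_le_mul_of_nonneg_left (by linarith) (hp a).le
  have hzero : ∑ a, (p a - X / Y * q a) = 0 := by
    rw [Finset.sum_sub_distrib, ← Finset.mul_sum, hX, hY]
    field_simp
    ring
  linarith

/-- Monotonicity of the gradient of `p ↦ ∑ a, p a * log (p a / ∑ b, p b)`. -/
lemma sum_sub_mul_log_sub_nonneg {A : Type*} [Fintype A] [Nonempty A] (p q : A → ℝ)
    (hp : ∀ a, 0 < p a) (hq : ∀ a, 0 < q a) :
    0 ≤ ∑ a, (p a - q a) * (Real.log (p a / ∑ b, p b) - Real.log (q a / ∑ b, q b)) := by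
  have h := add_nonneg (sum_mul_log_sub_nonneg p q hp hq) (sum_mul_log_sub_nonneg q p hq hp)
  rw [← Finset.sum_add_distrib] at h
  refine h.trans_eq (Finset.sum_congr rfl fun a _ => ?_)
  ring

/-- Injectivity of `K_πᵀ = I - γ P_πᵀ`, by contraction of `γ P_πᵀ` in the `ℓ¹` norm. -/
lemma eq_zero_of_discounted_flow {S A : Type*} [Fintype S] [Fintype A]
    (γ : ℝ) (hγ0 : 0 < γ) (hγ1 : γ < 1)
    (P : A → Matrix S S ℝ) (hP : ∀ a s s', 0 ≤ P a s s') (hrow : ∀ a s, ∑ s', P a s s' = 1)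
    (w : S → A → ℝ) (hw : ∀ s a, 0 ≤ w s a) (hw1 : ∀ s, ∑ a, w s a = 1) (d : S → ℝ)
    (hd : ∀ s', d s' = γ * ∑ s, ∑ a, P a s s' * (w s a * d s)) (s : S) : d s = 0 := by
  have hle : ∑ s', |d s'| ≤ γ * ∑ s, |d s| := by
    calc ∑ s', |d s'| ≤ ∑ s', γ * ∑ s, ∑ a, P a s s' * (w s a * |d s|) := by
          refine Finset.sum_le_sum fun s' _ => ?_
          rw [hd s', abs_mul, abs_of_pos hγ0]
          refine mul_le_mul_of_nonneg_left ?_ hγ0.le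
          refine (Finset.abs_sum_le_sum_abs _ _).trans (Finset.sum_le_sum fun s _ => ?_)
          refine (Finset.abs_sum_le_sum_abs _ _).trans (Finset.sum_le_sum fun a _ => ?_)
          rw [abs_mul, abs_mul, abs_of_nonneg (hP a s s'), abs_of_nonneg (hw s a)]
      _ = γ * ∑ s, |d s| := by
          rw [← Finset.mul_sum, Finset.sum_comm]
          congr 1
          refine Finset.sum_congr rfl fun s _ => ?_
          rw [Finset.sum_comm]
          simp_rw [← Finset.sum_mul, hrow, one_mul, ← Finset.sum_mul, hw1, one_mul]
  have hnn : 0 ≤ ∑ s, |d s| := Finset.sum_nonneg fun s _ => abs_nonneg _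
  have h0 : ∑ s, |d s| = 0 := by nlinarith
  exact abs_eq_zero.mp
    ((Finset.sum_eq_zero_iff_of_nonneg fun s _ => abs_nonneg (d s)).mp h0 s (Finset.mem_univ s))

/-- The quadratically convexified first-order condition
α v_{s'} = Σ_{s,a} K_{ass'} u_{sa},  τ log(u_{sa}/ũ_s) = r_{sa} − Σ_{s'} K_{ass'} v_{s'}
has at most one solution (v,u) ∈ ℝ^S × ℝ_{>0}^{S×A}. -/
theorem statement_17 (S A : Type*) [Fintype S] [Fintype A] [Nonempty S] [Nonempty A]
    [DecidableEq S]
    (γ : ℝ) (hγ0 : 0 < γ) (hγ1 : γ < 1)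
    (P : A → Matrix S S ℝ) (hP : ∀ a s s', 0 ≤ P a s s') (hrow : ∀ a s, ∑ s', P a s s' = 1)
    (K : A → Matrix S S ℝ) (hK : ∀ a, K a = 1 - γ • P a)
    (r : S → A → ℝ) (α τ : ℝ) (hα : 0 < α) (hτ : 0 < τ)
    (v1 v2 : S → ℝ) (u1 u2 : S → A → ℝ)
    (hu1 : ∀ s a, 0 < u1 s a) (hu2 : ∀ s a, 0 < u2 s a)
    (h1v : ∀ s', α * v1 s' = ∑ s, ∑ a, K a s s' * u1 s a)
    (h1u : ∀ s a, τ * Real.log (u1 s a / ∑ b, u1 s b) = r s a - ∑ s', K a s s' * v1 s')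
    (h2v : ∀ s', α * v2 s' = ∑ s, ∑ a, K a s s' * u2 s a)
    (h2u : ∀ s a, τ * Real.log (u2 s a / ∑ b, u2 s b) = r s a - ∑ s', K a s s' * v2 s') :
    v1 = v2 ∧ u1 = u2 := by
  have hv : v1 = v2 := by
    have henergy : α * ∑ s', (v1 s' - v2 s') ^ 2 = -τ * ∑ s, ∑ a, (u1 s a - u2 s a) *
        (Real.log (u1 s a / ∑ b, u1 s b) - Real.log (u2 s a / ∑ b, u2 s b)) := by
      have hL : ∀ s', α * (v1 s' - v2 s') ^ 2
          = ∑ s, ∑ a, (v1 s' - v2 s') * (K a s s' * (u1 s a - u2 s a)) := by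
        intro s'
        simp_rw [← Finset.mul_sum, mul_sub (K _ _ _), Finset.sum_sub_distrib]
        rw [← h1v, ← h2v]
        ring
      rw [Finset.mul_sum, Finset.sum_congr rfl fun s' _ => hL s', Finset.sum_comm, Finset.mul_sum]
      refine Finset.sum_congr rfl fun s _ => ?_
      rw [Finset.sum_comm, Finset.mul_sum]
      refine Finset.sum_congr rfl fun a _ => ?_
      have hR : ∑ s', (v1 s' - v2 s') * (K a s s' * (u1 s a - u2 s a))
          = (u1 s a - u2 s a) * (∑ s', K a s s' * v1 s' - ∑ s', K a s s' * v2 s') := by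
        rw [← Finset.sum_sub_distrib, Finset.mul_sum]
        exact Finset.sum_congr rfl fun s' _ => by ring
      rw [hR]
      linear_combination (-(u1 s a - u2 s a)) * (h2u s a - h1u s a)
    have hmono : 0 ≤ ∑ s, ∑ a, (u1 s a - u2 s a) *
        (Real.log (u1 s a / ∑ b, u1 s b) - Real.log (u2 s a / ∑ b, u2 s b)) :=
      Finset.sum_nonneg fun s _ => sum_sub_mul_log_sub_nonneg _ _ (hu1 s) (hu2 s)
    have hnn : 0 ≤ ∑ s', (v1 s' - v2 s') ^ 2 := Finset.sum_nonneg fun s _ => sq_nonneg _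
    have h0 : ∑ s', (v1 s' - v2 s') ^ 2 = 0 := by
      nlinarith [mul_nonneg hτ.le hmono, mul_nonneg hα.le hnn]
    funext s
    have := (Finset.sum_eq_zero_iff_of_nonneg fun s _ => sq_nonneg (v1 s - v2 s)).mp h0 s
      (Finset.mem_univ s)
    exact sub_eq_zero.mp (pow_eq_zero_iff two_ne_zero |>.mp this)
  subst hv
  refine ⟨rfl, ?_⟩
  have hU1 : ∀ s, 0 < ∑ b, u1 s b :=
    fun s => Finset.sum_pos (fun b _ => hu1 s b) Finset.univ_nonempty
  have hU2 : ∀ s, 0 < ∑ b, u2 s b :=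
    fun s => Finset.sum_pos (fun b _ => hu2 s b) Finset.univ_nonempty
  have hpi : ∀ s a, u1 s a / ∑ b, u1 s b = u2 s a / ∑ b, u2 s b := fun s a =>
    Real.log_injOn_pos (div_pos (hu1 s a) (hU1 s)) (div_pos (hu2 s a) (hU2 s))
      (mul_left_cancel₀ hτ.ne' ((h1u s a).trans (h2u s a).symm))
  have hdiff : ∀ s a, u1 s a - u2 s a
      = u1 s a / (∑ b, u1 s b) * (∑ b, u1 s b - ∑ b, u2 s b) := by
    intro s a
    rw [mul_sub, div_mul_cancel₀ _ (hU1 s).ne', hpi, div_mul_cancel₀ _ (hU2 s).ne']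
  have hd := eq_zero_of_discounted_flow γ hγ0 hγ1 P hP hrow
    (fun s a => u1 s a / ∑ b, u1 s b) (fun s a => (div_pos (hu1 s a) (hU1 s)).le)
    (fun s => by rw [← Finset.sum_div, div_self (hU1 s).ne'])
    (fun s => ∑ b, u1 s b - ∑ b, u2 s b) (fun s' => by
      simp only [← hdiff]
      have hsum : ∀ u : S → A → ℝ, ∑ s, ∑ a, K a s s' * u s a
          = ∑ a, u s' a - γ * ∑ s, ∑ a, P a s s' * u s a := by
        intro u
        simp only [hK, Matrix.sub_apply, Matrix.smul_apply, smul_eq_mul, sub_mul,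
          Finset.sum_sub_distrib, Finset.mul_sum, mul_assoc]
        congr 1
        rw [Finset.sum_comm]
        simp [Matrix.one_apply]
      have h := (h1v s').symm.trans (h2v s')
      rw [hsum, hsum] at h
      simp only [mul_sub, Finset.sum_sub_distrib]
      linarith)
  funext s a
  have h := hdiff s a
  rw [show ∑ b, u1 s b - ∑ b, u2 s b = 0 from hd s, mul_zero] at h
  exact sub_eq_zero.mp h
end
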